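/- Let 𝔅 be a homothecy invariant basis of nonempty bounded open convex subsets of ℝⁿ which is also a Muckenhoupt basis, and let w be a nonnegative locally integrable function with ∫_B w < ∞ for every B ∈ 𝔅. Then w ∈ A_{∞,𝔅} if and only if there exist γ ∈ (0,1) and c > 0 such that w({x ∈ ℝⁿ : M_𝔅(1_E)(x) > γ}) ≤ c·w(E) for every Lebesgue measurable set E ⊆ ℝⁿ, where w(A) = ∫_A w(x) dx. -/

import Mathlib

open MeasureTheory Set Filter
open scoped ENNReal Topology Pointwise

noncomputable section

/-- The maximal operator `M_{𝔅,μ}` associated to a measure `μ` and a collection `𝔅`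
of subsets of `ℝⁿ`, applied to `f` at the point `x` (valued in `ℝ≥0∞`; it equals `0`
outside the union of `𝔅`). -/
noncomputable def maxOp {n : ℕ} (μ : Measure (EuclideanSpace ℝ (Fin n)))
    (𝔅 : Set (Set (EuclideanSpace ℝ (Fin n))))
    (f : EuclideanSpace ℝ (Fin n) → ℝ) (x : EuclideanSpace ℝ (Fin n)) : ℝ≥0∞ :=
  ⨆ (B : Set (EuclideanSpace ℝ (Fin n))) (_ : B ∈ 𝔅) (_ : x ∈ B) (_ : 0 < μ B),
    (∫⁻ y in B, ENNReal.ofReal |f y| ∂μ) / μ B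

/-- A collection of sets is homothecy invariant if it is closed under translations and
positive dilations. -/
def HomothecyInvariant {n : ℕ} (𝔅 : Set (Set (EuclideanSpace ℝ (Fin n)))) : Prop :=
  ∀ B ∈ 𝔅, (∀ y : EuclideanSpace ℝ (Fin n), y +ᵥ B ∈ 𝔅) ∧ (∀ s : ℝ, 0 < s → s • B ∈ 𝔅)

/-- `μ` is doubling with respect to the collection `𝔅`, with constant `Δ`: whenever
`B ∈ 𝔅` and a translate of the dilate `2·B` contains `B`, its measure is at most
`Δ·μ(B)`. -/
def DoublingWrt {n : ℕ} (μ : Measure (EuclideanSpace ℝ (Fin n)))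
    (𝔅 : Set (Set (EuclideanSpace ℝ (Fin n)))) (Δ : ℝ) : Prop :=
  ∀ B ∈ 𝔅, ∀ σ : EuclideanSpace ℝ (Fin n),
    B ⊆ σ +ᵥ (2 : ℝ) • B → μ (σ +ᵥ (2 : ℝ) • B) ≤ ENNReal.ofReal Δ * μ B

/-- A member of a basis of convex sets: nonempty, bounded, open and convex. -/
def IsConvexBasisSet {n : ℕ} (B : Set (EuclideanSpace ℝ (Fin n))) : Prop :=
  B.Nonempty ∧ Bornology.IsBounded B ∧ IsOpen B ∧ Convex ℝ B

/-- An open axis-parallel rectangle in `ℝⁿ`. -/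
def IsAxisRect {n : ℕ} (R : Set (EuclideanSpace ℝ (Fin n))) : Prop :=
  ∃ a b : Fin n → ℝ, (∀ i, a i < b i) ∧ R = {x | ∀ i, x i ∈ Set.Ioo (a i) (b i)}

/-- An open rectangle (possibly rotated rectangular parallelepiped) in `ℝⁿ`:
the image of an open axis-parallel rectangle under a rigid motion. -/
def IsRect {n : ℕ} (R : Set (EuclideanSpace ℝ (Fin n))) : Prop :=
  ∃ (f : EuclideanSpace ℝ (Fin n) ≃ᵢ EuclideanSpace ℝ (Fin n))
    (S : Set (EuclideanSpace ℝ (Fin n))), IsAxisRect S ∧ R = f '' S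

/-- An open axis-parallel cube in `ℝⁿ`. -/
def IsAxisCube {n : ℕ} (C : Set (EuclideanSpace ℝ (Fin n))) : Prop :=
  ∃ (a : Fin n → ℝ) (s : ℝ), 0 < s ∧ C = {x | ∀ i, x i ∈ Set.Ioo (a i) (a i + s)}

/-- `M_{𝔅,μ}` is bounded on `L^p(ν)`. -/
def BoundedOnLp {n : ℕ} (μ ν : Measure (EuclideanSpace ℝ (Fin n)))
    (𝔅 : Set (Set (EuclideanSpace ℝ (Fin n)))) (p : ℝ) : Prop :=
  ∃ C : ℝ≥0∞, C ≠ ⊤ ∧ ∀ f : EuclideanSpace ℝ (Fin n) → ℝ, Measurable f →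
    ∫⁻ x, maxOp μ 𝔅 f x ^ p ∂ν ≤ C * ∫⁻ x, ENNReal.ofReal |f x| ^ p ∂ν

/-- The Tauberian condition for `M_{𝔅,μ}` at level `γ`, with constant `c`, with respect
to the measure `ν`. -/
def TauberianCond {n : ℕ} (μ ν : Measure (EuclideanSpace ℝ (Fin n)))
    (𝔅 : Set (Set (EuclideanSpace ℝ (Fin n)))) (γ c : ℝ) : Prop :=
  ∀ E : Set (EuclideanSpace ℝ (Fin n)), MeasurableSet E →
    ν {x | ENNReal.ofReal γ < maxOp μ 𝔅 (E.indicator 1) x} ≤ ENNReal.ofReal c * ν E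

/-- The standard open dyadic box of scale `2^k` and position `m` in `ℝⁿ`. -/
def stdBox (n : ℕ) (k : ℤ) (m : Fin n → ℤ) : Set (Fin n → ℝ) :=
  {x | ∀ i, (m i : ℝ) * 2 ^ k < x i ∧ x i < ((m i : ℝ) + 1) * 2 ^ k}

/-- A parametrization of a rectangular grid: a rigid motion composed with a positive
diagonal scaling. The image of the standard unit box under such a map is a rectangle. -/
def IsRectParam {n : ℕ} (T : (Fin n → ℝ) → EuclideanSpace ℝ (Fin n)) : Prop :=
  ∃ (f : EuclideanSpace ℝ (Fin n) ≃ᵢ EuclideanSpace ℝ (Fin n)) (l : Fin n → ℝ),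
    (∀ i, 0 < l i) ∧
    ∀ x, T x = f ((WithLp.equiv 2 (Fin n → ℝ)).symm (fun i => l i * x i))

/-- The dyadic mesh generated by a rectangle parametrized by `T`. -/
def dyadicMesh {n : ℕ} (T : (Fin n → ℝ) → EuclideanSpace ℝ (Fin n)) :
    Set (Set (EuclideanSpace ℝ (Fin n))) :=
  {S | ∃ (k : ℤ) (m : Fin n → ℤ), S = T '' stdBox n k m}

/-- `S` is a dyadic descendant of the rectangle `R`, `s` generations inside `R`. -/
def DyadicDescendant {n : ℕ} (R S : Set (EuclideanSpace ℝ (Fin n))) (s : ℕ) : Prop :=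
  ∃ T : (Fin n → ℝ) → EuclideanSpace ℝ (Fin n), IsRectParam T ∧
    T '' stdBox n 0 0 = R ∧
    ∃ m : Fin n → ℤ, (∀ i, 0 ≤ m i ∧ m i < 2 ^ s) ∧ S = T '' stdBox n (-(s : ℤ)) m

/-- The family of all homothetic copies (translates and positive dilates) of `R₀`. -/
def homCopies {n : ℕ} (R₀ : Set (EuclideanSpace ℝ (Fin n))) :
    Set (Set (EuclideanSpace ℝ (Fin n))) :=
  {S | ∃ (y : EuclideanSpace ℝ (Fin n)) (s : ℝ), 0 < s ∧ S = y +ᵥ s • R₀}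

/-- Iterated halo sets `H_β^k(E)`: `H_β^0(E) = E` and
`H_β^{k+1}(E) = {x : M_{𝔊,μ}(1_{H_β^k(E)})(x) ≥ β}`. -/
def Hiter {n : ℕ} (μ : Measure (EuclideanSpace ℝ (Fin n)))
    (𝔊 : Set (Set (EuclideanSpace ℝ (Fin n)))) (β : ℝ)
    (E : Set (EuclideanSpace ℝ (Fin n))) : ℕ → Set (EuclideanSpace ℝ (Fin n))
  | 0 => E
  | k + 1 => {x | ENNReal.ofReal β ≤ maxOp μ 𝔊 ((Hiter μ 𝔊 β E k).indicator 1) x}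

/-- The Muckenhoupt `A_{p,𝔅}` condition for a weight `w` (with respect to Lebesgue
measure); here `1 - p/(p-1) = 1 - p'`. -/
def MuckenhouptAp {n : ℕ} (𝔅 : Set (Set (EuclideanSpace ℝ (Fin n))))
    (w : EuclideanSpace ℝ (Fin n) → ℝ) (p : ℝ) : Prop :=
  ∃ C : ℝ≥0∞, C ≠ ⊤ ∧ ∀ B ∈ 𝔅,
    ((∫⁻ x in B, ENNReal.ofReal (w x) ∂volume) / volume B) *
      (((∫⁻ x in B, ENNReal.ofReal (w x) ^ (1 - p / (p - 1)) ∂volume) / volume B) ^ (p - 1))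
      ≤ C

/-- `𝔅` is a Muckenhoupt basis: for every `1 < p < ∞` and every weight `w ∈ A_{p,𝔅}`,
the maximal operator `M_𝔅` is bounded on `L^p(w)`. -/
def MuckenhouptBasis {n : ℕ} (𝔅 : Set (Set (EuclideanSpace ℝ (Fin n)))) : Prop :=
  ∀ p : ℝ, 1 < p → ∀ w : EuclideanSpace ℝ (Fin n) → ℝ, (∀ x, 0 ≤ w x) →
    LocallyIntegrable w volume → MuckenhouptAp 𝔅 w p →
    BoundedOnLp volume (volume.withDensity fun x => ENNReal.ofReal (w x)) 𝔅 p

end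

/-!
Let `K ∈ 𝔅`, let `E ⊆ K` fill at most the fraction `γ` of `K`, and shrink `K` towards a density
point of `E`. The first copy in which the density of `E` exceeds `γ` also carries a fixed proportion
of the complement of `E`. A Vitali selection among these copies, engulfed by translates of multiples
of the difference body `K - K`, shows that the halo of `E` in `K` is larger than `E` by a factor
`κ⁻¹ > 1` depending only on the dimension and on `γ`. By the Tauberian condition, taking the halo
multiplies the `w`-measure by at most a constant `c`. Iterating until the halo fills `K`, a set
`E ⊆ K` with `c ^ k * w(E) < w(K)` has `|E| ≤ κ ^ k * |K|`. Applied to the sublevel sets of `w`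
in `K`, this makes the average of `w ^ (-ε)` over `K` comparable to the `-ε` power of the average of
`w` as soon as `c ^ ε * κ < 1`, which is the `A_p` condition with `p = 1 + 1 / ε`.

Conversely, if `w ∈ A_p` then `M_𝔅` is bounded on `L^p(w)` because `𝔅` is a Muckenhoupt basis, and
the Tauberian condition at every level is Chebyshev's inequality.
-/

open Module AffineMap

section HomotheticCopies

variable {V : Type*} [AddCommGroup V] [Module ℝ V] {K : Set V}

lemma image_homothety_subset_self (hK : Convex ℝ K) {x : V} (hx : x ∈ K) {s : ℝ}
    (hs : s ∈ Icc (0 : ℝ) 1) : homothety x s '' K ⊆ K := by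
  rintro _ ⟨y, hy, rfl⟩
  rw [homothety_eq_lineMap]
  exact hK.lineMap_mem hx hy hs

lemma mem_image_homothety_self {x : V} (hx : x ∈ K) (s : ℝ) : x ∈ homothety x s '' K :=
  ⟨x, hx, homothety_apply_same x s⟩

lemma image_homothety_subset_of_inter_nonempty (hK : Convex ℝ K) {a b : V} (hb : b ∈ K)
    {r s : ℝ} (hs : 0 ≤ s) (hsr : s ≤ 2 * r)
    (hmeet : (homothety a s '' K ∩ homothety b r '' K).Nonempty) :
    homothety a s '' K ⊆ b +ᵥ (3 * r) • (K - K) := by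
  obtain ⟨_, ⟨z, hz, rfl⟩, z', hz', hzz'⟩ := hmeet
  rintro _ ⟨y, hy, rfl⟩
  have hD : Convex ℝ (K - K) := hK.sub hK
  have hsplit : (3 * r) • (K - K) = r • (K - K) + (s • (K - K) + (2 * r - s) • (K - K)) := by
    rw [← hD.add_smul hs (by linarith), ← hD.add_smul (by linarith) (by linarith)]
    ring_nf
  refine mem_vadd_set.2 ⟨r • (z' - b) + (s • (y - z) + (2 * r - s) • (b - b)), ?_, ?_⟩
  · rw [hsplit]
    exact add_mem_add (smul_mem_smul_set (sub_mem_sub hz' hb))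
      (add_mem_add (smul_mem_smul_set (sub_mem_sub hy hz)) (smul_mem_smul_set (sub_mem_sub hb hb)))
  · simp only [homothety_apply, vsub_eq_sub, vadd_eq_add] at hzz' ⊢
    linear_combination (norm := module) hzz'

lemma isOpen_image_homothety [TopologicalSpace V] [IsTopologicalAddGroup V]
    [ContinuousConstSMul ℝ V] (hK : IsOpen K) (x : V) {s : ℝ} (hs : s ≠ 0) :
    IsOpen (homothety x s '' K) :=
  homothety_isOpenMap x s hs K hK

end HomotheticCopies

lemma lintegral_measure_inter_preimage_add_left {G : Type*} [AddGroup G] [MeasurableSpace G]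
    [MeasurableAdd₂ G] [MeasurableNeg G] (μ : Measure G) [SFinite μ] [μ.IsAddRightInvariant]
    {S T : Set G} (hS : MeasurableSet S) (hT : MeasurableSet T) :
    ∫⁻ v, μ (S ∩ (v + ·) ⁻¹' T) ∂μ = μ S * μ T := by
  have hA : MeasurableSet {z : G × G | z.1 ∈ S ∧ z.2 + z.1 ∈ T} := by measurability
  have hpre : (fun z : G × G => (z.1, z.2 - z.1)) ⁻¹' {z | z.1 ∈ S ∧ z.2 + z.1 ∈ T} = S ×ˢ T := by
    ext z; simp
  rw [← Measure.prod_prod, ← hpre,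
    (measurePreserving_prod_sub μ μ).measure_preimage hA.nullMeasurableSet,
    Measure.prod_apply_symm hA]
  rfl

section HaarMeasure

variable {V : Type*} [NormedAddCommGroup V] [NormedSpace ℝ V] [FiniteDimensional ℝ V]
  [MeasurableSpace V] [BorelSpace V] (μ : Measure V) [μ.IsAddHaarMeasure] {K : Set V}

lemma addHaar_image_homothety_of_nonneg (x : V) {s : ℝ} (hs : 0 ≤ s) (K : Set V) :
    μ (homothety x s '' K) = ENNReal.ofReal s ^ finrank ℝ V * μ K := by
  rw [Measure.addHaar_image_homothety, abs_of_nonneg (by positivity), ENNReal.ofReal_pow hs]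

lemma addHaar_image_homothety_two_inv (x : V) (K : Set V) :
    μ (homothety x (2⁻¹ : ℝ) '' K) = (2 ^ finrank ℝ V)⁻¹ * μ K := by
  rw [addHaar_image_homothety_of_nonneg μ x (by norm_num),
    ENNReal.ofReal_inv_of_pos (by norm_num), ENNReal.ofReal_ofNat, ← ENNReal.inv_pow]

lemma le_addHaar_inter_preimage_add_left (hK : Convex ℝ K) {v : V}
    (hv : v ∈ homothety (0 : V) (2⁻¹ : ℝ) '' (K - K)) :
    (2 ^ finrank ℝ V)⁻¹ * μ K ≤ μ (K ∩ (v + ·) ⁻¹' K) := by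
  obtain ⟨_, ⟨a, ha, b, hb, rfl⟩, rfl⟩ := hv
  rw [← addHaar_image_homothety_two_inv μ b]
  refine measure_mono (subset_inter
    (image_homothety_subset_self hK hb ⟨by norm_num, by norm_num⟩) ?_)
  rintro _ ⟨z, hz, rfl⟩
  rw [mem_preimage]
  convert image_homothety_subset_self hK ha (s := 2⁻¹) ⟨by norm_num, by norm_num⟩
    (mem_image_of_mem _ hz) using 1
  simp only [homothety_apply, vsub_eq_sub, vadd_eq_add]
  module

lemma addHaar_sub_self_le (hKo : IsOpen K) (hK : Convex ℝ K) :
    μ (K - K) ≤ 4 ^ finrank ℝ V * μ K := by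
  -- Integrating `μ (K ∩ (K - v))` over all `v` gives exactly `μ K ^ 2`, while the integrand is at
  -- least `2 ^ (-d) * μ K` on the set `(K - K) / 2`.
  set d := finrank ℝ V
  rcases eq_or_ne (μ K) ∞ with hKtop | hKtop
  · simp [hKtop]
  rcases K.eq_empty_or_nonempty with rfl | hKne
  · simp
  have hdiff : IsOpen (homothety (0 : V) (2⁻¹ : ℝ) '' (K - K)) :=
    isOpen_image_homothety hKo.sub_right _ (by norm_num)
  have hsquare : μ K * ((4 ^ d)⁻¹ * μ (K - K)) ≤ μ K * μ K := calc
    μ K * ((4 ^ d)⁻¹ * μ (K - K))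
        = (2 ^ d)⁻¹ * μ K * μ (homothety (0 : V) (2⁻¹ : ℝ) '' (K - K)) := by
          rw [addHaar_image_homothety_two_inv, show (4 : ℝ≥0∞) = 2 * 2 by norm_num, mul_pow,
            ENNReal.mul_inv (by simp) (by simp)]
          ring
    _ ≤ ∫⁻ v in homothety (0 : V) (2⁻¹ : ℝ) '' (K - K), μ (K ∩ (v + ·) ⁻¹' K) ∂μ := by
          rw [← setLIntegral_const]
          exact setLIntegral_mono' hdiff.measurableSet fun v hv =>
            le_addHaar_inter_preimage_add_left μ hK hv
    _ ≤ ∫⁻ v, μ (K ∩ (v + ·) ⁻¹' K) ∂μ := setLIntegral_le_lintegral _ _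
    _ = μ K * μ K :=
          lintegral_measure_inter_preimage_add_left μ hKo.measurableSet hKo.measurableSet
  rwa [ENNReal.mul_le_mul_iff_right (hKo.measure_pos μ hKne).ne' hKtop,
    ENNReal.inv_mul_le_iff (by simp) (by simp)] at hsquare

lemma addHaar_vadd_smul_sub_self_le (hKo : IsOpen K) (hK : Convex ℝ K) (b : V) {r : ℝ}
    (hr : 0 ≤ r) :
    μ (b +ᵥ (3 * r) • (K - K)) ≤ 12 ^ finrank ℝ V * μ (homothety b r '' K) := by
  rw [measure_vadd, Measure.addHaar_smul_of_nonneg μ (by positivity),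
    addHaar_image_homothety_of_nonneg μ b hr, mul_pow, ENNReal.ofReal_mul (by positivity),
    ENNReal.ofReal_pow (by norm_num), ENNReal.ofReal_pow hr, ENNReal.ofReal_ofNat]
  calc _ ≤ 3 ^ finrank ℝ V * ENNReal.ofReal r ^ finrank ℝ V * (4 ^ finrank ℝ V * μ K) := by
        gcongr
        exact addHaar_sub_self_le μ hKo hK
    _ = (3 * 4) ^ finrank ℝ V * (ENNReal.ofReal r ^ finrank ℝ V * μ K) := by
        rw [mul_pow]; ring
    _ = _ := by norm_num

theorem exists_disjoint_image_homothety_covering (hKo : IsOpen K) (hK : Convex ℝ K) {G : Set V}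
    (hG : G ⊆ K) {σ : V → ℝ} (hσ : ∀ x ∈ G, σ x ∈ Ioc (0 : ℝ) 1) :
    ∃ u ⊆ G, u.Countable ∧ u.PairwiseDisjoint (fun x => homothety x (σ x) '' K) ∧
      μ G ≤ 12 ^ finrank ℝ V * ∑' x : u, μ (homothety (x : V) (σ x) '' K) := by
  have hmem : ∀ x ∈ G, x ∈ homothety x (σ x) '' K := fun x hx =>
    mem_image_homothety_self (hG hx) _
  obtain ⟨u, huG, hdisj, hcov⟩ := Vitali.exists_disjoint_subfamily_covering_enlargement
    (fun x => homothety x (σ x) '' K) G σ 2 one_lt_two (fun x hx => (hσ x hx).1.le) 1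
    (fun x hx => (hσ x hx).2) (fun x hx => ⟨x, hmem x hx⟩)
  have hu : u.Countable := hdisj.countable_of_isOpen
    (fun x hx => isOpen_image_homothety hKo x (hσ x (huG hx)).1.ne')
    (fun x hx => ⟨x, hmem x (huG hx)⟩)
  have hGcov : G ⊆ ⋃ b ∈ u, b +ᵥ (3 * σ b) • (K - K) := fun x hx => by
    obtain ⟨b, hb, hmeet, hle⟩ := hcov x hx
    exact mem_biUnion hb (image_homothety_subset_of_inter_nonempty hK (hG (huG hb))
      (hσ x hx).1.le hle hmeet (hmem x hx))
  refine ⟨u, huG, hu, hdisj, ?_⟩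
  calc μ G ≤ ∑' b : u, μ ((b : V) +ᵥ (3 * σ b) • (K - K)) :=
        (measure_mono hGcov).trans (measure_biUnion_le μ hu _)
    _ ≤ ∑' b : u, 12 ^ finrank ℝ V * μ (homothety (b : V) (σ b) '' K) :=
        ENNReal.tsum_le_tsum fun b => addHaar_vadd_smul_sub_self_le μ hKo hK _ (hσ b (huG b.2)).1.le
    _ = _ := ENNReal.tsum_mul_left

end HaarMeasure

section Halo

/-- The union of the members of `𝔉` in which `E` has `μ`-density greater than `γ`: the superlevel
set `{M 1_E > γ}` of the maximal function along `𝔉`, if the members of `𝔉` have finite measure. -/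
def halo {X : Type*} [MeasurableSpace X] (μ : Measure X) (𝔉 : Set (Set X)) (γ : ℝ≥0∞)
    (E : Set X) : Set X :=
  ⋃₀ {B ∈ 𝔉 | γ * μ B < μ (E ∩ B)}

section General

variable {X : Type*} [MeasurableSpace X] {μ : Measure X} {𝔉 𝔊 : Set (Set X)} {γ : ℝ≥0∞}
  {E : Set X}

lemma halo_mono (h : 𝔉 ⊆ 𝔊) : halo μ 𝔉 γ E ⊆ halo μ 𝔊 γ E :=
  sUnion_subset_sUnion fun _ hB => ⟨h hB.1, hB.2⟩

lemma isOpen_halo [TopologicalSpace X] (h : ∀ B ∈ 𝔉, IsOpen B) : IsOpen (halo μ 𝔉 γ E) :=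
  isOpen_sUnion fun B hB => h B hB.1

lemma one_sub_mul_measure_le_measure_sdiff {B : Set X} (hB : μ B ≠ ∞)
    (h : μ (E ∩ B) ≤ γ * μ B) : (1 - γ) * μ B ≤ μ (B \ E) := calc
  (1 - γ) * μ B = μ B - γ * μ B := by rw [ENNReal.sub_mul fun _ _ => hB, one_mul]
  _ ≤ μ B - μ (E ∩ B) := tsub_le_tsub_left h _
  _ ≤ μ (B \ E) := by
    rw [← sdiff_inter_self_eq_sdiff]
    exact le_measure_sdiff

end General

/-- The homothetic copies of `K` of ratio at most `1` centred at points of `K`. When `K` is convex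
they are contained in `K`. -/
def innerHomothets {V : Type*} [AddCommGroup V] [Module ℝ V] (K : Set V) : Set (Set V) :=
  {B | ∃ x ∈ K, ∃ s ∈ Ioc (0 : ℝ) 1, homothety x s '' K = B}

section InnerHomothets

variable {V : Type*} [AddCommGroup V] [Module ℝ V] {K : Set V}

lemma isOpen_of_mem_innerHomothets [TopologicalSpace V] [IsTopologicalAddGroup V]
    [ContinuousConstSMul ℝ V] (hKo : IsOpen K) {B : Set V} (hB : B ∈ innerHomothets K) :
    IsOpen B := by
  obtain ⟨x, -, s, hs, rfl⟩ := hB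
  exact isOpen_image_homothety hKo x hs.1.ne'

variable [MeasurableSpace V] {μ : Measure V} {E : Set V} {γ : ℝ≥0∞}

lemma halo_innerHomothets_subset (hK : Convex ℝ K) : halo μ (innerHomothets K) γ E ⊆ K := by
  refine sUnion_subset ?_
  rintro _ ⟨⟨x, hx, s, hs, rfl⟩, -⟩
  exact image_homothety_subset_self hK hx (Ioc_subset_Icc_self hs)

lemma subset_halo_innerHomothets (hEK : E ⊆ K) (hE : γ * μ K < μ E) :
    K ⊆ halo μ (innerHomothets K) γ E := fun x hx =>
  mem_sUnion_of_mem hx ⟨⟨x, hx, 1, by simp, by simp⟩, by rwa [inter_eq_left.2 hEK]⟩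

end InnerHomothets

variable {V : Type*} [NormedAddCommGroup V] [NormedSpace ℝ V] [FiniteDimensional ℝ V]
  [MeasurableSpace V] [BorelSpace V] {μ : Measure V} [μ.IsAddHaarMeasure] {K E : Set V} {γ : ℝ≥0∞}

lemma tendsto_measure_inter_image_homothety_div {x : V}
    (hx : Tendsto (fun r => μ (E ∩ Metric.closedBall x r) / μ (Metric.closedBall x r))
      (𝓝[>] 0) (𝓝 1)) (hK : MeasurableSet K) (hK0 : μ K ≠ 0) (hKtop : μ K ≠ ∞) :
    Tendsto (fun s : ℝ => μ (E ∩ homothety x s '' K) / μ (homothety x s '' K))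
      (𝓝[>] 0) (𝓝 1) := by
  have himage : ∀ s : ℝ, homothety x s '' K = {x} + s • (-x +ᵥ K) := fun s => by
    rw [singleton_add, ← image_smul, ← image_vadd, image_image, image_image]
    refine image_congr fun y _ => ?_
    simp only [homothety_apply, vsub_eq_sub, vadd_eq_add]
    module
  simp only [himage]
  exact Measure.tendsto_addHaar_inter_smul_one_of_density_one μ E x hx (-x +ᵥ K)
    (hK.const_vadd _) (by rwa [measure_vadd]) (by rwa [measure_vadd])

lemma exists_image_homothety_stopping (hKo : IsOpen K) (hK : Convex ℝ K) (hKtop : μ K ≠ ∞)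
    {q : ℝ} (hq : q ∈ Ioo (0 : ℝ) 1) (hγ : γ ≤ ENNReal.ofReal q ^ (finrank ℝ V + 1))
    (hE : μ E ≤ γ * μ K) {x : V} (hxK : x ∈ K)
    (hx : Tendsto (fun r => μ (E ∩ Metric.closedBall x r) / μ (Metric.closedBall x r))
      (𝓝[>] 0) (𝓝 1)) :
    ∃ s ∈ Ioc (0 : ℝ) 1, γ * μ (homothety x s '' K) < μ (E ∩ homothety x s '' K) ∧
      μ (E ∩ homothety x s '' K) ≤ ENNReal.ofReal q * μ (homothety x s '' K) := by
  -- Stop at the first of the scales `1, q, q ^ 2, …` at which the density of `E` exceeds `γ`. The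
  -- previous copy has density at most `γ` and is only `q ^ (-d)` times larger.
  classical
  have hγ1 : γ < 1 := hγ.trans_lt (pow_lt_one₀ zero_le (ENNReal.ofReal_lt_one.2 hq.2) (by simp))
  have hdense : ∃ k : ℕ, γ * μ (homothety x (q ^ k) '' K) < μ (E ∩ homothety x (q ^ k) '' K) := by
    have hlim := (tendsto_measure_inter_image_homothety_div hx hKo.measurableSet
      (hKo.measure_pos μ ⟨x, hxK⟩).ne' hKtop).comp
        (tendsto_pow_atTop_nhdsWithin_zero_of_lt_one hq.1 hq.2)
    obtain ⟨k, hk⟩ := (hlim.eventually_const_lt hγ1).exists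
    exact ⟨k, ENNReal.mul_lt_of_lt_div hk⟩
  obtain ⟨j, hj⟩ : ∃ j, Nat.find hdense = j + 1 := by
    refine Nat.exists_eq_succ_of_ne_zero fun h0 => ?_
    have := Nat.find_spec hdense
    rw [h0, pow_zero, homothety_one, AffineMap.coe_id, image_id] at this
    exact this.not_ge ((measure_mono inter_subset_left).trans hE)
  have hnest : homothety x (q ^ (j + 1)) '' K ⊆ homothety x (q ^ j) '' K := by
    rintro _ ⟨y, hy, rfl⟩
    rw [pow_succ, homothety_mul_apply]
    exact mem_image_of_mem _ (image_homothety_subset_self hK hxK (Ioo_subset_Icc_self hq)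
      (mem_image_of_mem _ hy))
  refine ⟨q ^ (j + 1), ⟨pow_pos hq.1 _, pow_le_one₀ hq.1.le hq.2.le⟩,
    hj ▸ Nat.find_spec hdense, ?_⟩
  calc μ (E ∩ homothety x (q ^ (j + 1)) '' K)
      ≤ μ (E ∩ homothety x (q ^ j) '' K) := measure_mono (inter_subset_inter_right E hnest)
    _ ≤ γ * μ (homothety x (q ^ j) '' K) :=
        not_lt.1 (Nat.find_min hdense (hj ▸ j.lt_succ_self))
    _ ≤ ENNReal.ofReal q ^ (finrank ℝ V + 1) * μ (homothety x (q ^ j) '' K) := by gcongr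
    _ = ENNReal.ofReal q * μ (homothety x (q ^ (j + 1)) '' K) := by
        rw [addHaar_image_homothety_of_nonneg μ x (pow_nonneg hq.1.le _),
          addHaar_image_homothety_of_nonneg μ x (pow_nonneg hq.1.le _),
          ENNReal.ofReal_pow hq.1.le, ENNReal.ofReal_pow hq.1.le]
        ring

lemma one_add_mul_measure_le_measure_halo (hKo : IsOpen K) (hK : Convex ℝ K) (hKtop : μ K ≠ ∞)
    {q : ℝ} (hq : q ∈ Ioo (0 : ℝ) 1) (hγ : γ ≤ ENNReal.ofReal q ^ (finrank ℝ V + 1))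
    (hEK : E ⊆ K) (hEm : MeasurableSet E) (hE : μ E ≤ γ * μ K) :
    (1 + (1 - ENNReal.ofReal q) / 12 ^ finrank ℝ V) * μ E ≤ μ (halo μ (innerHomothets K) γ E) := by
  set H := halo μ (innerHomothets K) γ E
  set G := {x ∈ E | Tendsto (fun r => μ (E ∩ Metric.closedBall x r) / μ (Metric.closedBall x r))
    (𝓝[>] 0) (𝓝 1)}
  have hGE : μ G = μ E := by
    refine measure_eq_measure_of_null_sdiff (sep_subset _ _) (measure_mono_null ?_ <| ae_iff.1 <|
      (ae_restrict_iff' hEm).1 (Besicovitch.ae_tendsto_measure_inter_div μ E))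
    exact fun x hx h => hx.2 ⟨hx.1, h hx.1⟩
  have hscale : ∀ x ∈ G, ∃ s ∈ Ioc (0 : ℝ) 1,
      γ * μ (homothety x s '' K) < μ (E ∩ homothety x s '' K) ∧
      μ (E ∩ homothety x s '' K) ≤ ENNReal.ofReal q * μ (homothety x s '' K) := fun x hx =>
    exists_image_homothety_stopping hKo hK hKtop hq hγ hE (hEK hx.1) hx.2
  choose! σ hσ hdense hsparse using hscale
  have hGK : G ⊆ K := fun x hx => hEK hx.1
  have hBH : ∀ x ∈ G, homothety x (σ x) '' K ⊆ H := fun x hx =>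
    subset_sUnion_of_mem ⟨⟨x, hGK hx, σ x, hσ x hx, rfl⟩, hdense x hx⟩
  have hGH : G ⊆ H := fun x hx => hBH x hx (mem_image_homothety_self (hGK hx) _)
  obtain ⟨u, huG, hu, hdisj, hcov⟩ := exists_disjoint_image_homothety_covering μ hKo hK hGK hσ
  have hBm : ∀ x ∈ u, MeasurableSet (homothety x (σ x) '' K) := fun x hx =>
    (isOpen_image_homothety hKo x (hσ x (huG hx)).1.ne').measurableSet
  calc (1 + (1 - ENNReal.ofReal q) / 12 ^ finrank ℝ V) * μ E
      = μ G + (1 - ENNReal.ofReal q) / 12 ^ finrank ℝ V * μ G := by rw [hGE]; ring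
    _ ≤ μ G + (1 - ENNReal.ofReal q) / 12 ^ finrank ℝ V *
          (12 ^ finrank ℝ V * ∑' x : u, μ (homothety (x : V) (σ x) '' K)) := by gcongr
    _ = μ G + ∑' x : u, (1 - ENNReal.ofReal q) * μ (homothety (x : V) (σ x) '' K) := by
        rw [← mul_assoc, ENNReal.div_mul_cancel (by simp) (by simp), ENNReal.tsum_mul_left]
    _ ≤ μ G + ∑' x : u, μ (homothety (x : V) (σ x) '' K \ E) := by
        gcongr with x
        exact one_sub_mul_measure_le_measure_sdiff (measure_ne_top_of_subset
          (image_homothety_subset_self hK (hGK (huG x.2)) (Ioc_subset_Icc_self (hσ x (huG x.2))))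
          hKtop) (hsparse x (huG x.2))
    _ = μ G + μ (⋃ x ∈ u, homothety x (σ x) '' K \ E) := by
        rw [measure_biUnion hu (hdisj.mono fun _ => sdiff_subset) fun x hx => (hBm x hx).diff hEm]
    _ ≤ μ (H ∩ E) + μ (H \ E) := by
        gcongr
        · exact subset_inter hGH (sep_subset _ _)
        · exact iUnion₂_subset fun x hx => sdiff_subset_sdiff_left (hBH x (huG hx))
    _ = μ H := measure_inter_add_sdiff H hEm

lemma exists_le_ofReal_pow (hγ : γ < 1) (m : ℕ) :
    ∃ q ∈ Ioo (0 : ℝ) 1, γ ≤ ENNReal.ofReal q ^ m := by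
  have hlim : Tendsto (fun q : ℝ => ENNReal.ofReal q ^ m) (𝓝[<] 1) (𝓝 1) := by
    have : Continuous fun q : ℝ => ENNReal.ofReal q ^ m :=
      (ENNReal.continuous_pow m).comp ENNReal.continuous_ofReal
    simpa using (this.tendsto 1).mono_left nhdsWithin_le_nhds
  obtain ⟨q, hγq, hq⟩ := ((hlim.eventually_const_lt hγ).and (Ioo_mem_nhdsLT one_pos)).exists
  exact ⟨q, hq, hγq.le⟩

variable (μ) in
theorem exists_measure_le_mul_measure_halo (hγ : γ < 1) : ∃ κ < (1 : ℝ≥0∞), ∀ K E : Set V,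
    IsOpen K → Convex ℝ K → μ K ≠ ∞ → E ⊆ K → MeasurableSet E → μ E ≤ γ * μ K →
      μ E ≤ κ * μ (halo μ (innerHomothets K) γ E) := by
  obtain ⟨q, hq, hγq⟩ := exists_le_ofReal_pow hγ (finrank ℝ V + 1)
  have hδ : 0 < (1 - ENNReal.ofReal q) / 12 ^ finrank ℝ V :=
    ENNReal.div_pos (tsub_pos_of_lt (ENNReal.ofReal_lt_one.2 hq.2)).ne' (by simp)
  refine ⟨(1 + (1 - ENNReal.ofReal q) / 12 ^ finrank ℝ V)⁻¹,
    ENNReal.inv_lt_one.2 (ENNReal.lt_add_right ENNReal.one_ne_top hδ.ne'),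
    fun K E hKo hK hKtop hEK hEm hE => ?_⟩
  rw [← ENNReal.div_eq_inv_mul, ENNReal.le_div_iff_mul_le (by simp) (by simp [ENNReal.div_eq_top]),
    mul_comm]
  exact one_add_mul_measure_le_measure_halo hKo hK hKtop hq hγq hEK hEm hE

end Halo

section SmallSetDecay

/-- Subsets of `K` whose proportion in the measure `ν` is less than `c ^ (-k)` have proportion at
most `κ ^ k` in the measure `μ`, for every `k`. -/
def SmallSetDecay {X : Type*} [MeasurableSpace X] (μ ν : Measure X) (K : Set X) (c κ : ℝ≥0∞) :
    Prop :=
  ∀ (k : ℕ) (E : Set X), E ⊆ K → MeasurableSet E → c ^ k * ν E < ν K → μ E ≤ κ ^ k * μ K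

lemma smallSetDecay_of_measure_halo_le {V : Type*} [AddCommGroup V] [Module ℝ V]
    [TopologicalSpace V] [IsTopologicalAddGroup V] [ContinuousConstSMul ℝ V] [MeasurableSpace V]
    [OpensMeasurableSpace V] {μ ν : Measure V} {K : Set V} {γ c κ : ℝ≥0∞} (hKo : IsOpen K)
    (hK : Convex ℝ K) (hc : 1 ≤ c)
    (hμ : ∀ E ⊆ K, MeasurableSet E → μ E ≤ γ * μ K →
      μ E ≤ κ * μ (halo μ (innerHomothets K) γ E))
    (hν : ∀ E ⊆ K, MeasurableSet E → ν (halo μ (innerHomothets K) γ E) ≤ c * ν E) :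
    SmallSetDecay μ ν K c κ := by
  intro k
  induction k with
  | zero => exact fun E hEK _ _ => by simpa using measure_mono hEK
  | succ k ih =>
    intro E hEK hEm hE
    set H := halo μ (innerHomothets K) γ E
    have hHK : H ⊆ K := halo_innerHomothets_subset hK
    have hHm : MeasurableSet H :=
      (isOpen_halo fun _ => isOpen_of_mem_innerHomothets hKo).measurableSet
    have hγE : μ E ≤ γ * μ K := not_lt.1 fun hlt => hE.not_ge <| calc
      ν K ≤ ν H := measure_mono (subset_halo_innerHomothets hEK hlt)
      _ ≤ c * ν E := hν E hEK hEm
      _ ≤ c ^ (k + 1) * ν E := by gcongr; exact le_self_pow₀ hc k.succ_ne_zero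
    have hHν : c ^ k * ν H < ν K := calc
      c ^ k * ν H ≤ c ^ k * (c * ν E) := by gcongr; exact hν E hEK hEm
      _ = c ^ (k + 1) * ν E := by ring
      _ < ν K := hE
    calc μ E ≤ κ * μ H := hμ E hEK hEm hγE
      _ ≤ κ * (κ ^ k * μ K) := by gcongr; exact ih H hHK hHm hHν
      _ = κ ^ (k + 1) * μ K := by ring

lemma rpow_le_rpow_add_tsum_indicator {b c : ℝ≥0∞} {ε : ℝ} (hb : b ≠ 0) (hc : 1 ≤ c) (hε : 0 < ε)
    (t : ℝ≥0∞) :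
    t ^ ε ≤ b ^ ε + ∑' k : ℕ, (Ici (b * c ^ k)).indicator (fun _ => (b * c ^ (k + 1)) ^ ε) t := by
  by_cases hlt : ∃ k : ℕ, t < b * c ^ k
  · classical
    rcases hfind : Nat.find hlt with _ | j
    · have ht : t < b := by simpa [hfind] using Nat.find_spec hlt
      exact (ENNReal.rpow_le_rpow ht.le hε.le).trans le_self_add
    · have hle : b * c ^ j ≤ t := not_lt.1 (Nat.find_min hlt (hfind ▸ j.lt_succ_self))
      calc t ^ ε ≤ (b * c ^ (j + 1)) ^ ε :=
            ENNReal.rpow_le_rpow (hfind ▸ Nat.find_spec hlt).le hε.le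
        _ = (Ici (b * c ^ j)).indicator (fun _ => (b * c ^ (j + 1)) ^ ε) t := by
            rw [indicator_of_mem (mem_Ici.2 hle)]
        _ ≤ _ := (ENNReal.le_tsum j).trans le_add_self
  · push Not at hlt
    have htop : ∑' _ : ℕ, b ^ ε = ∞ :=
      ENNReal.tsum_const_eq_top_of_ne_zero (by simp [hb, hε.not_gt])
    calc t ^ ε ≤ ∑' _ : ℕ, b ^ ε := htop ▸ le_top
      _ ≤ ∑' k : ℕ, (Ici (b * c ^ k)).indicator (fun _ => (b * c ^ (k + 1)) ^ ε) t := by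
          gcongr with k
          rw [indicator_of_mem (mem_Ici.2 (hlt k))]
          exact ENNReal.rpow_le_rpow (le_mul_of_one_le_right' (one_le_pow₀ hc)) hε.le
      _ ≤ _ := le_add_self

variable {X : Type*} [MeasurableSpace X] {μ : Measure X} {c κ : ℝ≥0∞} {ε : ℝ}

lemma lintegral_rpow_le_of_measure_superlevel_le {h : X → ℝ≥0∞} (hh : AEMeasurable h μ)
    {b : ℝ≥0∞} (hb : b ≠ 0) (hc : 1 ≤ c) (hε : 0 < ε)
    (hdecay : ∀ k : ℕ, μ {x | b * c ^ k ≤ h x} ≤ κ ^ k * μ univ) :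
    ∫⁻ x, h x ^ ε ∂μ ≤ b ^ ε * (1 + c ^ ε * (1 - c ^ ε * κ)⁻¹) * μ univ := by
  have hnull : ∀ k : ℕ, NullMeasurableSet {x | b * c ^ k ≤ h x} μ := fun k =>
    nullMeasurableSet_le aemeasurable_const hh
  calc ∫⁻ x, h x ^ ε ∂μ
      ≤ ∫⁻ x, (b ^ ε + ∑' k : ℕ,
          {x | b * c ^ k ≤ h x}.indicator (fun _ => (b * c ^ (k + 1)) ^ ε) x) ∂μ :=
        lintegral_mono fun x => rpow_le_rpow_add_tsum_indicator hb hc hε (h x)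
    _ = b ^ ε * μ univ + ∑' k : ℕ, (b * c ^ (k + 1)) ^ ε * μ {x | b * c ^ k ≤ h x} := by
        rw [lintegral_add_left measurable_const, lintegral_const,
          lintegral_tsum fun k => aemeasurable_const.indicator₀ (hnull k)]
        simp only [lintegral_indicator_const₀ (hnull _)]
    _ ≤ b ^ ε * μ univ + ∑' k : ℕ, (b * c ^ (k + 1)) ^ ε * (κ ^ k * μ univ) := by
        gcongr with k
        exact hdecay k
    _ = b ^ ε * μ univ + ∑' k : ℕ, b ^ ε * c ^ ε * μ univ * (c ^ ε * κ) ^ k := by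
        congr! 3 with k
        rw [ENNReal.mul_rpow_of_nonneg _ _ hε.le, pow_succ, ENNReal.mul_rpow_of_nonneg _ _ hε.le,
          ← ENNReal.rpow_natCast_mul, mul_comm (k : ℝ), ENNReal.rpow_mul_natCast, mul_pow]
        ring
    _ = b ^ ε * (1 + c ^ ε * (1 - c ^ ε * κ)⁻¹) * μ univ := by
        rw [ENNReal.tsum_mul_left, ENNReal.tsum_geometric]
        ring

lemma exists_rpow_mul_lt_one (hc0 : c ≠ 0) (hctop : c ≠ ∞) (hκ : κ < 1) :
    ∃ ε > (0 : ℝ), c ^ ε * κ < 1 := by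
  lift c to NNReal using hctop
  lift κ to NNReal using (hκ.trans ENNReal.one_lt_top).ne
  norm_cast at hc0 hκ
  have hlim : Tendsto (fun ε : ℝ => c ^ ε * κ) (𝓝[>] 0) (𝓝 κ) := by
    simpa using ((tendsto_const_nhds.nnrpow tendsto_id (.inl hc0)).mul_const κ).mono_left
      (nhdsWithin_le_nhds (a := (0 : ℝ)) (s := Ioi 0))
  obtain ⟨ε, hlt, hε⟩ := ((hlim.eventually_lt_const hκ).and self_mem_nhdsWithin).exists
  exact ⟨ε, hε, by rw [← ENNReal.coe_rpow_of_ne_zero hc0]; exact_mod_cast hlt⟩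

variable {f : X → ℝ≥0∞} {K : Set X}

lemma SmallSetDecay.measure_le_inv_le {b : ℝ≥0∞}
    (h : SmallSetDecay μ (μ.withDensity f) K c κ) (hf : AEMeasurable f μ) (hK : MeasurableSet K)
    (hc : 1 ≤ c) (hctop : c ≠ ∞) (hb : b⁻¹ * μ K < μ.withDensity f K) (k : ℕ) :
    μ.restrict K {x | b * c ^ k ≤ (f x)⁻¹} ≤ κ ^ k * μ.restrict K univ := by
  have hck : c ^ k ≠ 0 := pow_ne_zero k (one_pos.trans_le hc).ne'
  have hcktop : c ^ k ≠ ∞ := ENNReal.pow_ne_top hctop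
  obtain ⟨E, hES, hEm, hEae⟩ := NullMeasurableSet.exists_measurable_subset_ae_eq
    (nullMeasurableSet_le aemeasurable_const hf.inv : NullMeasurableSet {x | b * c ^ k ≤ (f x)⁻¹} μ)
  rw [← measure_congr (ae_restrict_of_ae hEae), Measure.restrict_apply hEm,
    Measure.restrict_apply_univ]
  refine h k (E ∩ K) inter_subset_right (hEm.inter hK) (lt_of_le_of_lt ?_ hb)
  calc c ^ k * μ.withDensity f (E ∩ K)
      = c ^ k * ∫⁻ x in E ∩ K, f x ∂μ := by rw [withDensity_apply _ (hEm.inter hK)]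
    _ ≤ c ^ k * ∫⁻ _ in E ∩ K, (b * c ^ k)⁻¹ ∂μ := by
        gcongr 1
        exact setLIntegral_mono' (hEm.inter hK) fun x hx => ENNReal.le_inv_iff_le_inv.1 (hES hx.1)
    _ = b⁻¹ * μ (E ∩ K) := by
        rw [setLIntegral_const, ENNReal.mul_inv (.inr hcktop) (.inr hck), ← mul_assoc,
          mul_left_comm, ENNReal.mul_inv_cancel hck hcktop, mul_one]
    _ ≤ b⁻¹ * μ K := by gcongr; exact inter_subset_right

theorem SmallSetDecay.average_mul_average_rpow_neg_le
    (h : SmallSetDecay μ (μ.withDensity f) K c κ) (hf : AEMeasurable f μ) (hK : MeasurableSet K)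
    (hμ0 : μ K ≠ 0) (hμtop : μ K ≠ ∞) (hftop : ∫⁻ x in K, f x ∂μ ≠ ∞)
    (hc : 1 ≤ c) (hctop : c ≠ ∞) (hε : 0 < ε) :
    (∫⁻ x in K, f x ∂μ) / μ K * ((∫⁻ x in K, f x ^ (-ε) ∂μ) / μ K) ^ ε⁻¹ ≤
      2 * (1 + c ^ ε * (1 - c ^ ε * κ)⁻¹) ^ ε⁻¹ := by
  set a := (∫⁻ x in K, f x ∂μ) / μ K
  set D := 1 + c ^ ε * (1 - c ^ ε * κ)⁻¹
  rcases eq_or_ne (∫⁻ x in K, f x ∂μ) 0 with hf0 | hf0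
  · simp [a, hf0]
  have ha0 : a ≠ 0 := ENNReal.div_ne_zero.2 ⟨hf0, hμtop⟩
  have hatop : a ≠ ∞ := ENNReal.div_ne_top hftop hμ0
  have hhalf : (2 / a)⁻¹ * μ K < μ.withDensity f K := calc
    (2 / a)⁻¹ * μ K = (∫⁻ x in K, f x ∂μ) / 2 := by
      rw [ENNReal.inv_div (.inl hatop) (.inl ha0), ENNReal.div_eq_inv_mul,
        mul_assoc, ENNReal.div_mul_cancel hμ0 hμtop, ENNReal.div_eq_inv_mul]
    _ < ∫⁻ x in K, f x ∂μ := ENNReal.half_lt_self hf0 hftop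
    _ = μ.withDensity f K := (withDensity_apply _ hK).symm
  have hint : (∫⁻ x in K, f x ^ (-ε) ∂μ) / μ K ≤ (2 / a) ^ ε * D := by
    refine ENNReal.div_le_of_le_mul ?_
    simpa only [ENNReal.rpow_neg, ← ENNReal.inv_rpow, Measure.restrict_apply_univ, Pi.inv_apply]
      using lintegral_rpow_le_of_measure_superlevel_le hf.inv.restrict
        (ENNReal.div_ne_zero.2 ⟨two_ne_zero, hatop⟩) hc hε
        (h.measure_le_inv_le hf hK hc hctop hhalf)
  calc a * ((∫⁻ x in K, f x ^ (-ε) ∂μ) / μ K) ^ ε⁻¹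
      ≤ a * ((2 / a) ^ ε * D) ^ ε⁻¹ := by gcongr
    _ = a * (2 / a) * D ^ ε⁻¹ := by
        rw [ENNReal.mul_rpow_of_nonneg _ _ (by positivity), ENNReal.rpow_rpow_inv hε.ne', mul_assoc]
    _ = 2 * D ^ ε⁻¹ := by rw [ENNReal.mul_div_cancel ha0 hatop]

end SmallSetDecay

section Basis

variable {n : ℕ} {𝔅 : Set (Set (EuclideanSpace ℝ (Fin n)))}
  {μ ν : Measure (EuclideanSpace ℝ (Fin n))}

lemma IsConvexBasisSet.volume_ne_zero {B : Set (EuclideanSpace ℝ (Fin n))}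
    (h : IsConvexBasisSet B) : volume B ≠ 0 :=
  (h.2.2.1.measure_pos volume h.1).ne'

lemma IsConvexBasisSet.volume_ne_top {B : Set (EuclideanSpace ℝ (Fin n))}
    (h : IsConvexBasisSet B) : volume B ≠ ∞ :=
  h.2.1.measure_lt_top.ne

lemma HomothecyInvariant.innerHomothets_subset (h𝔅 : HomothecyInvariant 𝔅)
    {K : Set (EuclideanSpace ℝ (Fin n))} (hK : K ∈ 𝔅) : innerHomothets K ⊆ 𝔅 := by
  rintro _ ⟨x, -, s, hs, rfl⟩
  have himage : homothety x s '' K = (x - s • x) +ᵥ s • K := by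
    rw [← image_smul, ← image_vadd, image_image]
    refine image_congr fun y _ => ?_
    simp only [homothety_apply, vsub_eq_sub, vadd_eq_add]
    module
  exact himage ▸ (h𝔅 _ ((h𝔅 K hK).2 s hs.1)).1 _

lemma setOf_lt_maxOp_indicator (h𝔅 : ∀ B ∈ 𝔅, μ B ≠ ∞) {E : Set (EuclideanSpace ℝ (Fin n))}
    (hE : MeasurableSet E) (γ : ℝ≥0∞) :
    {x | γ < maxOp μ 𝔅 (E.indicator 1) x} = halo μ 𝔅 γ E := by
  have hint : ∀ B, ∫⁻ y in B, ENNReal.ofReal |E.indicator 1 y| ∂μ = μ (E ∩ B) := fun B => by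
    have : (fun y => ENNReal.ofReal |E.indicator 1 y|) = E.indicator 1 := by
      ext y
      by_cases hy : y ∈ E <;> simp [hy]
    rw [this, lintegral_indicator_one hE, Measure.restrict_apply hE]
  ext x
  simp only [maxOp, hint, lt_iSup_iff, halo, mem_ofPred_eq, mem_sUnion]
  constructor
  · rintro ⟨B, hB, hx, -, hlt⟩
    exact ⟨B, ⟨hB, ENNReal.mul_lt_of_lt_div hlt⟩, hx⟩
  · rintro ⟨B, ⟨hB, hlt⟩, hx⟩
    have hpos : 0 < μ B := (zero_le.trans_lt hlt).trans_le (measure_mono inter_subset_right)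
    exact ⟨B, hB, hx, hpos, (ENNReal.lt_div_iff_mul_lt (.inl hpos.ne') (.inl (h𝔅 B hB))).2 hlt⟩

lemma BoundedOnLp.exists_tauberianCond {p : ℝ} (h : BoundedOnLp μ ν 𝔅 p) (hp : 0 < p)
    (h𝔅o : ∀ B ∈ 𝔅, IsOpen B) (h𝔅 : ∀ B ∈ 𝔅, μ B ≠ ∞) {γ : ℝ} (hγ : 0 < γ) :
    ∃ c : ℝ, 0 < c ∧ TauberianCond μ ν 𝔅 γ c := by
  obtain ⟨C, hC, hbound⟩ := h
  set g := ENNReal.ofReal γ ^ p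
  have hg0 : g ≠ 0 := by simp [g, hγ, hp.not_gt]
  have hgtop : g ≠ ∞ := by finiteness
  refine ⟨(C / g).toReal + 1, by positivity, fun E hE => ?_⟩
  rw [setOf_lt_maxOp_indicator h𝔅 hE]
  set H := halo μ 𝔅 (ENNReal.ofReal γ) E with hH
  have hchebyshev : ν H * g ≤ C * ν E := calc
    ν H * g = ∫⁻ _ in H, g ∂ν := by rw [setLIntegral_const, mul_comm]
    _ ≤ ∫⁻ x in H, maxOp μ 𝔅 (E.indicator 1) x ^ p ∂ν := by
      refine setLIntegral_mono' (isOpen_halo h𝔅o).measurableSet fun x hx => ?_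
      rw [hH, ← setOf_lt_maxOp_indicator h𝔅 hE] at hx
      exact ENNReal.rpow_le_rpow (le_of_lt hx) hp.le
    _ ≤ ∫⁻ x, maxOp μ 𝔅 (E.indicator 1) x ^ p ∂ν := setLIntegral_le_lintegral _ _
    _ ≤ C * ∫⁻ x, ENNReal.ofReal |E.indicator 1 x| ^ p ∂ν :=
      hbound _ (measurable_one.indicator hE)
    _ = C * ν E := by
      have : (fun x => ENNReal.ofReal |E.indicator 1 x| ^ p) = E.indicator 1 := by
        ext x
        by_cases hx : x ∈ E <;> simp [hx, hp]
      rw [this, lintegral_indicator_one hE]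
  calc ν H ≤ C * ν E / g := ENNReal.le_div_iff_mul_le (.inl hg0) (.inl hgtop) |>.2 hchebyshev
    _ = C / g * ν E := by rw [ENNReal.div_eq_inv_mul, ENNReal.div_eq_inv_mul, mul_assoc]
    _ ≤ ENNReal.ofReal ((C / g).toReal + 1) * ν E := by
      gcongr
      exact ENNReal.le_ofReal_iff_toReal_le (ENNReal.div_ne_top hC hg0) (by positivity) |>.2
        (by simp)

theorem TauberianCond.exists_muckenhouptAp {w : EuclideanSpace ℝ (Fin n) → ℝ} {γ c : ℝ}
    (h : TauberianCond volume (volume.withDensity fun x => ENNReal.ofReal (w x)) 𝔅 γ c)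
    (hγ : γ < 1) (h𝔅 : ∀ B ∈ 𝔅, IsConvexBasisSet B) (hhom : HomothecyInvariant 𝔅)
    (hw : AEMeasurable w) (hwB : ∀ B ∈ 𝔅, ∫⁻ x in B, ENNReal.ofReal (w x) < ∞) :
    ∃ p : ℝ, 1 < p ∧ MuckenhouptAp 𝔅 w p := by
  obtain ⟨κ, hκ, hgrowth⟩ := exists_measure_le_mul_measure_halo
    (volume : Measure (EuclideanSpace ℝ (Fin n))) (ENNReal.ofReal_lt_one.2 hγ)
  have hc : 1 ≤ 1 + ENNReal.ofReal c := le_self_add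
  have hctop : 1 + ENNReal.ofReal c ≠ ∞ := by finiteness
  obtain ⟨ε, hε, hεκ⟩ := exists_rpow_mul_lt_one (one_pos.trans_le hc).ne' hctop hκ
  have hexp : 1 - (1 + ε⁻¹) / (1 + ε⁻¹ - 1) = -ε := by field_simp; ring
  have hgap : 1 - (1 + ENNReal.ofReal c) ^ ε * κ ≠ 0 := (tsub_pos_of_lt hεκ).ne'
  refine ⟨1 + ε⁻¹, by simpa using hε,
    2 * (1 + (1 + ENNReal.ofReal c) ^ ε * (1 - (1 + ENNReal.ofReal c) ^ ε * κ)⁻¹) ^ ε⁻¹,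
    by finiteness, fun K hK => ?_⟩
  obtain ⟨-, -, hKo, hKc⟩ := h𝔅 K hK
  set ν := volume.withDensity fun x => ENNReal.ofReal (w x)
  have hKtop := (h𝔅 K hK).volume_ne_top
  have hdecay := smallSetDecay_of_measure_halo_le hKo hKc hc
    (fun E hEK hE hEγ => hgrowth K E hKo hKc hKtop hEK hE hEγ) fun E _ hE => calc
      ν (halo volume (innerHomothets K) (ENNReal.ofReal γ) E)
          ≤ ν (halo volume 𝔅 (ENNReal.ofReal γ) E) :=
            measure_mono (halo_mono (hhom.innerHomothets_subset hK))
      _ = ν {x | ENNReal.ofReal γ < maxOp volume 𝔅 (E.indicator 1) x} := by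
            rw [setOf_lt_maxOp_indicator (fun B hB => (h𝔅 B hB).volume_ne_top) hE]
      _ ≤ ENNReal.ofReal c * ν E := h E hE
      _ ≤ (1 + ENNReal.ofReal c) * ν E := by gcongr; exact le_add_self
  rw [hexp, add_sub_cancel_left]
  exact hdecay.average_mul_average_rpow_neg_le hw.ennreal_ofReal hKo.measurableSet
    (h𝔅 K hK).volume_ne_zero hKtop (hwB K hK).ne hc hctop hε

end Basis

/-- For a homothecy invariant basis `𝔅` of nonempty bounded open convex
sets which is also a Muckenhoupt basis, a nonnegative locally integrable weight `w`
(finite on members of `𝔅`) belongs to `A_{∞,𝔅} = ⋃_{p>1} A_{p,𝔅}` iff it satisfies a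
weighted Tauberian condition at some fixed level `γ ∈ (0,1)`. -/
theorem statement4 (n : ℕ) (𝔅 : Set (Set (EuclideanSpace ℝ (Fin n))))
    (hB : ∀ B ∈ 𝔅, IsConvexBasisSet B) (hhom : HomothecyInvariant 𝔅)
    (hMB : MuckenhouptBasis 𝔅)
    (w : EuclideanSpace ℝ (Fin n) → ℝ) (hw0 : ∀ x, 0 ≤ w x)
    (hwloc : LocallyIntegrable w volume)
    (hwB : ∀ B ∈ 𝔅, ∫⁻ x in B, ENNReal.ofReal (w x) ∂volume < ⊤) :
    (∃ p : ℝ, 1 < p ∧ MuckenhouptAp 𝔅 w p)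
    ↔ (∃ γ ∈ Set.Ioo (0 : ℝ) 1, ∃ c : ℝ, 0 < c ∧
        TauberianCond volume (volume.withDensity fun x => ENNReal.ofReal (w x)) 𝔅 γ c) := by
  constructor
  · rintro ⟨p, hp, hAp⟩
    exact ⟨2⁻¹, by norm_num, (hMB p hp w hw0 hwloc hAp).exists_tauberianCond (one_pos.trans hp)
      (fun B h => (hB B h).2.2.1) (fun B h => (hB B h).volume_ne_top) (by norm_num)⟩
  · rintro ⟨γ, hγ, c, -, hT⟩
    exact hT.exists_muckenhouptAp hγ.2 hB hhom hwloc.aestronglyMeasurable.aemeasurable hwB
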